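/- arXiv:2206.01031 — 3 statements merged into one kernel-verified Lean document; each statement's English description precedes it below -/
import Mathlib

section
/- Let j⁽⁰⁾,…,j⁽⁴⁾ be reals satisfying j⁽¹⁾ ≥ j⁽²⁾ ≥ j⁽⁴⁾ ≥ 0, j⁽⁰⁾ ≥ j⁽⁴⁾, j⁽ⁱ⁾ ≥ 0 for all i, j⁽¹⁾+j⁽²⁾+j⁽⁰⁾+j⁽⁴⁾ ≥ j⁽³⁾ ≥ j⁽¹⁾+j⁽²⁾+j⁽⁰⁾−j⁽⁴⁾, with N := j⁽¹⁾+j⁽²⁾−j⁽³⁾+j⁽⁴⁾+j⁽⁰⁾ a positive integer. Then: (a) for all integers n ≥ 1, p ≥ 0 with n+p ≤ N, every factor of the expression n(2j⁽¹⁾+1−n)(2j⁽²⁾+1−n)(2j⁽¹⁾+2j⁽²⁾+2−n)(N−n−p+2j⁽³⁾+2)(N−n−p+1)(p−n−N+2j⁽¹⁾+2j⁽²⁾+1)(n−p−N+2j⁽⁰⁾+2j⁽⁴⁾) / ((2j⁽¹⁾+2j⁽²⁾+2−2n)²(2j⁽¹⁾+2j⁽²⁾+1−2n)(2j⁽¹⁾+2j⁽²⁾+3−2n))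 is strictly positive, hence the expression itself is strictly positive; (b) for all integers n ≥ 0, p ≥ 1 with n+p ≤ N, every factor of p(2j⁽⁴⁾+1−p)(2j⁽⁰⁾+1−p)(2j⁽⁴⁾+2j⁽⁰⁾+2−p)(N−n−p+2j⁽³⁾+2)(N−n−p+1)(p−n−N+2j⁽¹⁾+2j⁽²⁾)(n−p−N+2j⁽⁰⁾+2j⁽⁴⁾+1) / ((2j⁽⁰⁾+2j⁽⁴⁾+2−2p)²(2j⁽⁰⁾+2j⁽⁴⁾+1−2p)(2j⁽⁰⁾+2j⁽⁴⁾+3−2p)) is strictly positive, hence the expression itself is strictly positive. -/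
noncomputable section

theorem stmt12 (j0 j1 j2 j3 j4 : ℝ) (N : ℤ)
    (h12 : j1 ≥ j2) (h24 : j2 ≥ j4) (h04 : j0 ≥ j4)
    (h0 : j0 ≥ 0) (h1 : j1 ≥ 0) (h2 : j2 ≥ 0) (h3 : j3 ≥ 0) (h4 : j4 ≥ 0)
    (hup : j1 + j2 + j0 + j4 ≥ j3) (hlow : j3 ≥ j1 + j2 + j0 - j4)
    (hN : 0 < N) (hNdef : (N : ℝ) = j1 + j2 - j3 + j4 + j0) :
    (∀ n p : ℤ, 1 ≤ n → 0 ≤ p → n + p ≤ N →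
      (0 < (n : ℝ) ∧
       0 < 2 * j1 + 1 - (n : ℝ) ∧
       0 < 2 * j2 + 1 - (n : ℝ) ∧
       0 < 2 * j1 + 2 * j2 + 2 - (n : ℝ) ∧
       0 < (N : ℝ) - n - p + 2 * j3 + 2 ∧
       0 < (N : ℝ) - n - p + 1 ∧
       0 < (p : ℝ) - n - N + 2 * j1 + 2 * j2 + 1 ∧
       0 < (n : ℝ) - p - N + 2 * j0 + 2 * j4 ∧
       0 < (2 * j1 + 2 * j2 + 2 - 2 * (n : ℝ)) ^ 2 ∧
       0 < 2 * j1 + 2 * j2 + 1 - 2 * (n : ℝ) ∧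
       0 < 2 * j1 + 2 * j2 + 3 - 2 * (n : ℝ)) ∧
      0 < (n : ℝ) * (2 * j1 + 1 - n) * (2 * j2 + 1 - n) * (2 * j1 + 2 * j2 + 2 - n) *
            ((N : ℝ) - n - p + 2 * j3 + 2) * ((N : ℝ) - n - p + 1) *
            ((p : ℝ) - n - N + 2 * j1 + 2 * j2 + 1) * ((n : ℝ) - p - N + 2 * j0 + 2 * j4) /
          ((2 * j1 + 2 * j2 + 2 - 2 * (n : ℝ)) ^ 2 * (2 * j1 + 2 * j2 + 1 - 2 * (n : ℝ)) *
            (2 * j1 + 2 * j2 + 3 - 2 * (n : ℝ)))) ∧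
    (∀ n p : ℤ, 0 ≤ n → 1 ≤ p → n + p ≤ N →
      (0 < (p : ℝ) ∧
       0 < 2 * j4 + 1 - (p : ℝ) ∧
       0 < 2 * j0 + 1 - (p : ℝ) ∧
       0 < 2 * j4 + 2 * j0 + 2 - (p : ℝ) ∧
       0 < (N : ℝ) - n - p + 2 * j3 + 2 ∧
       0 < (N : ℝ) - n - p + 1 ∧
       0 < (p : ℝ) - n - N + 2 * j1 + 2 * j2 ∧
       0 < (n : ℝ) - p - N + 2 * j0 + 2 * j4 + 1 ∧
       0 < (2 * j0 + 2 * j4 + 2 - 2 * (p : ℝ)) ^ 2 ∧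
       0 < 2 * j0 + 2 * j4 + 1 - 2 * (p : ℝ) ∧
       0 < 2 * j0 + 2 * j4 + 3 - 2 * (p : ℝ)) ∧
      0 < (p : ℝ) * (2 * j4 + 1 - p) * (2 * j0 + 1 - p) * (2 * j4 + 2 * j0 + 2 - p) *
            ((N : ℝ) - n - p + 2 * j3 + 2) * ((N : ℝ) - n - p + 1) *
            ((p : ℝ) - n - N + 2 * j1 + 2 * j2) * ((n : ℝ) - p - N + 2 * j0 + 2 * j4 + 1) /
          ((2 * j0 + 2 * j4 + 2 - 2 * (p : ℝ)) ^ 2 * (2 * j0 + 2 * j4 + 1 - 2 * (p : ℝ)) *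
            (2 * j0 + 2 * j4 + 3 - 2 * (p : ℝ)))) := by
  have hN4 : (N : ℝ) ≤ 2 * j4 := by linarith
  constructor
  · intro n p hn hp hnp
    have hn' : (1 : ℝ) ≤ n := by exact_mod_cast hn
    have hp' : (0 : ℝ) ≤ p := by exact_mod_cast hp
    have hnp' : (n : ℝ) + p ≤ N := by exact_mod_cast hnp
    have a1 : 0 < (n : ℝ) := by linarith
    have a2 : 0 < 2 * j1 + 1 - (n : ℝ) := by linarith
    have a3 : 0 < 2 * j2 + 1 - (n : ℝ) := by linarith
    have a4 : 0 < 2 * j1 + 2 * j2 + 2 - (n : ℝ) := by linarith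
    have a5 : 0 < (N : ℝ) - n - p + 2 * j3 + 2 := by linarith
    have a6 : 0 < (N : ℝ) - n - p + 1 := by linarith
    have a7 : 0 < (p : ℝ) - n - N + 2 * j1 + 2 * j2 + 1 := by linarith
    have a8 : 0 < (n : ℝ) - p - N + 2 * j0 + 2 * j4 := by linarith
    have a9 : 0 < 2 * j1 + 2 * j2 + 1 - 2 * (n : ℝ) := by linarith
    have a10 : 0 < 2 * j1 + 2 * j2 + 3 - 2 * (n : ℝ) := by linarith
    have b : 0 < (2 * j1 + 2 * j2 + 2 - 2 * (n : ℝ)) ^ 2 := pow_pos (by linarith) 2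
    refine ⟨⟨a1, a2, a3, a4, a5, a6, a7, a8, b, a9, a10⟩, ?_⟩
    exact div_pos (mul_pos (mul_pos (mul_pos (mul_pos (mul_pos (mul_pos (mul_pos a1 a2) a3) a4) a5) a6) a7) a8)
      (mul_pos (mul_pos b a9) a10)
  · intro n p hn hp hnp
    have hn' : (0 : ℝ) ≤ n := by exact_mod_cast hn
    have hp' : (1 : ℝ) ≤ p := by exact_mod_cast hp
    have hnp' : (n : ℝ) + p ≤ N := by exact_mod_cast hnp
    have a1 : 0 < (p : ℝ) := by linarith
    have a2 : 0 < 2 * j4 + 1 - (p : ℝ) := by linarith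
    have a3 : 0 < 2 * j0 + 1 - (p : ℝ) := by linarith
    have a4 : 0 < 2 * j4 + 2 * j0 + 2 - (p : ℝ) := by linarith
    have a5 : 0 < (N : ℝ) - n - p + 2 * j3 + 2 := by linarith
    have a6 : 0 < (N : ℝ) - n - p + 1 := by linarith
    have a7 : 0 < (p : ℝ) - n - N + 2 * j1 + 2 * j2 := by linarith
    have a8 : 0 < (n : ℝ) - p - N + 2 * j0 + 2 * j4 + 1 := by linarith
    have a9 : 0 < 2 * j0 + 2 * j4 + 1 - 2 * (p : ℝ) := by linarith
    have a10 : 0 < 2 * j0 + 2 * j4 + 3 - 2 * (p : ℝ) := by linarith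
    have b : 0 < (2 * j0 + 2 * j4 + 2 - 2 * (p : ℝ)) ^ 2 := pow_pos (by linarith) 2
    refine ⟨⟨a1, a2, a3, a4, a5, a6, a7, a8, b, a9, a10⟩, ?_⟩
    exact div_pos (mul_pos (mul_pos (mul_pos (mul_pos (mul_pos (mul_pos (mul_pos a1 a2) a3) a4) a5) a6) a7) a8)
      (mul_pos (mul_pos b a9) a10)
end
end

section
/- Let 𝒩 be a positive integer and α, β, δ real parameters such that all denominators appearing below are nonzero (i.e. (α+1)_k ≠ 0 and (β+δ+1)_k ≠ 0 for 0 ≤ k ≤ 𝒩+1, and 2n+α+β+j ≠ 0 for 0 ≤ n ≤ 𝒩 and j ∈ {0,1,2}). Write r̃_n(m) := r_n(m; α, β, −𝒩−2, δ+1) (the Racah function on the grid of size 𝒩+1), with the convention r̃_{−1} := 0. Define λ̃(m) := (m+1+δ)(𝒩−m+1)(β+δ+1)/(𝒩+1), E_n := (n+2+β+δ)(n+α+1)(n+β+δ+1)(n+α+β+1)/((2n+α+β+1)(2n+α+β+2)), G_n := n(n−1+α−δ)(n+α−δ)(n+β)/((2n+α+β)(2n+α+β+1)), and F_n := −E_n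 − G_n + (δ+1)(β+δ+1). Then for all integers 0 ≤ n ≤ 𝒩 and 0 ≤ m ≤ 𝒩: λ̃(m)·r_n(m; α, β, −𝒩−1, δ) = E_n·r̃_{n+1}(m) + F_n·r̃_n(m) + G_n·r̃_{n−1}(m). -/
noncomputable section

open Finset Real

/-- Pochhammer symbol `(y)_k = y(y+1)⋯(y+k−1)` for real `y`. -/
def poch (y : ℝ) (k : ℕ) : ℝ := ∏ i ∈ Finset.range k, (y + i)

/-- The terminating Racah function `r_n(m; α, β, −𝒩−1, δ)` on the grid `{0,…,𝒩}`:
`r_n(m) = ∑_{k=0}^{n} (−n)_k (n+α+β+1)_k (−m)_k (m−𝒩+δ)_k /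
  ((α+1)_k (β+δ+1)_k (−𝒩)_k k!)`. -/
def racah (𝒩 : ℕ) (α β δ : ℝ) (n m : ℕ) : ℝ :=
  ∑ k ∈ Finset.range (n + 1),
    (poch (-(n : ℝ)) k * poch ((n : ℝ) + α + β + 1) k * poch (-(m : ℝ)) k *
        poch ((m : ℝ) - (𝒩 : ℝ) + δ) k) /
      (poch (α + 1) k * poch (β + δ + 1) k * poch (-(𝒩 : ℝ)) k * (Nat.factorial k : ℝ))

/-- `λ̃(m) = (m+1+δ)(𝒩−m+1)(β+δ+1)/(𝒩+1)`. -/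
def lamTilde (𝒩 : ℕ) (β δ : ℝ) (m : ℕ) : ℝ :=
  ((m : ℝ) + 1 + δ) * ((𝒩 : ℝ) - (m : ℝ) + 1) * (β + δ + 1) / ((𝒩 : ℝ) + 1)

/-- `E_n = (n+2+β+δ)(n+α+1)(n+β+δ+1)(n+α+β+1)/((2n+α+β+1)(2n+α+β+2))`. -/
def coeffE (α β δ : ℝ) (n : ℕ) : ℝ :=
  ((n : ℝ) + 2 + β + δ) * ((n : ℝ) + α + 1) * ((n : ℝ) + β + δ + 1) * ((n : ℝ) + α + β + 1) /
    ((2 * (n : ℝ) + α + β + 1) * (2 * (n : ℝ) + α + β + 2))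

/-- `G_n = n(n−1+α−δ)(n+α−δ)(n+β)/((2n+α+β)(2n+α+β+1))`. -/
def coeffG (α β δ : ℝ) (n : ℕ) : ℝ :=
  (n : ℝ) * ((n : ℝ) - 1 + α - δ) * ((n : ℝ) + α - δ) * ((n : ℝ) + β) /
    ((2 * (n : ℝ) + α + β) * (2 * (n : ℝ) + α + β + 1))

/-- `F_n = −E_n − G_n + (δ+1)(β+δ+1)`. -/
def coeffF (α β δ : ℝ) (n : ℕ) : ℝ :=
  -coeffE α β δ n - coeffG α β δ n + (δ + 1) * (β + δ + 1)

theorem poch_zero' (y : ℝ) : poch y 0 = 1 := by simp [poch]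

theorem poch_succ' (y : ℝ) (k : ℕ) : poch y (k + 1) = poch y k * (y + k) := by
  simp [poch, Finset.prod_range_succ]

theorem poch_left' (y : ℝ) (k : ℕ) : poch y (k + 1) = y * poch (y + 1) k := by
  unfold poch
  rw [Finset.prod_range_succ']
  push_cast
  rw [mul_comm]
  congr 1
  · ring
  · apply Finset.prod_congr rfl
    intro i _
    ring

theorem poch_neg_nat (n k : ℕ) (h : n < k) : poch (-(n : ℝ)) k = 0 := by
  unfold poch
  apply Finset.prod_eq_zero (Finset.mem_range.2 h)
  ring

theorem poch_neg_nat_ne (n k : ℕ) (h : k ≤ n) : poch (-(n : ℝ)) k ≠ 0 := by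
  unfold poch
  apply Finset.prod_ne_zero_iff.2
  intro i hi
  have h1 : i < n := lt_of_lt_of_le (Finset.mem_range.1 hi) h
  have h2 : (i : ℝ) < n := by exact_mod_cast h1
  intro h3
  linarith

/-- numerator factor -/
def numR (x s : ℝ) (k : ℕ) : ℝ := poch (-x) k * poch (x + s + 1) k

/-- grid factor -/
def phiR (y c : ℝ) (k : ℕ) : ℝ := poch (-y) k * poch (y + c) k

/-- denominator -/
def denR (𝒩 : ℕ) (α β δ : ℝ) (k : ℕ) : ℝ :=
  poch (α + 1) k * poch (β + δ + 1) k * poch (-(𝒩 : ℝ)) k * (Nat.factorial k : ℝ)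

theorem racah_ext (𝒩 : ℕ) (α β δ : ℝ) (n m M : ℕ) (h : n + 1 ≤ M) :
    racah 𝒩 α β δ n m = ∑ k ∈ Finset.range M,
      numR n (α + β) k / denR 𝒩 α β δ k * phiR m (δ - 𝒩) k := by
  unfold racah
  rw [← Finset.sum_subset (Finset.range_subset_range.2 h)]
  · apply Finset.sum_congr rfl
    intro k _
    unfold numR denR phiR
    rw [show (m : ℝ) + (δ - 𝒩) = m - 𝒩 + δ by ring,
      show (n : ℝ) + (α + β) + 1 = n + α + β + 1 by ring]
    ring
  · intro k _ hk
    have : n < k := by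
      simp only [Finset.mem_range, not_lt] at hk
      omega
    unfold numR
    rw [poch_neg_nat n k this]
    simp

theorem num_diff (x s : ℝ) (j : ℕ) :
    numR (x + 1) s (j + 1) - numR x s (j + 1) =
      -((j : ℝ) + 1) * (2 * x + s + 2) * (poch (-x) j * poch (x + s + 2) j) := by
  unfold numR
  rw [poch_left' (-(x + 1)), poch_succ' (-x), poch_left' (x + s + 1),
    poch_succ' (x + 1 + s + 1)]
  rw [show -(x + 1) + 1 = -x by ring, show x + s + 1 + 1 = x + s + 2 by ring,
    show x + 1 + s + 1 = x + s + 2 by ring]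
  ring

theorem key_num (x α β δ : ℝ) (j : ℕ) (h0 : 2 * x + α + β ≠ 0)
    (h1 : 2 * x + α + β + 1 ≠ 0) (h2 : 2 * x + α + β + 2 ≠ 0) :
    (x + 2 + β + δ) * (x + α + 1) * (x + β + δ + 1) * (x + α + β + 1) /
      ((2 * x + α + β + 1) * (2 * x + α + β + 2)) *
        (numR (x + 1) (α + β) (j + 1) - numR x (α + β) (j + 1))
    - x * (x - 1 + α - δ) * (x + α - δ) * (x + β) /
      ((2 * x + α + β) * (2 * x + α + β + 1)) *
        (numR x (α + β) (j + 1) - numR (x - 1) (α + β) (j + 1))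
    + (δ + 1) * (β + δ + 1) * numR x (α + β) (j + 1) =
    numR x (α + β) j * (-((α + 1 + j) * (β + δ + 1 + j) * (β + δ + 2 + j) * (j + 1))
      + (j + 2 + δ) * (β + δ + 2 + j) * (-x + j) * (x + α + β + 1 + j)) := by
  have e1 := num_diff x (α + β) j
  have e2 := num_diff (x - 1) (α + β) j
  rw [sub_add_cancel] at e2
  rw [e1, e2]
  have p1 : poch (x + (α + β) + 1) j * (x + (α + β) + 1 + j)
      = (x + α + β + 1) * poch (x + (α + β) + 2) j := by
    rw [← poch_succ', poch_left', show x + (α + β) + 1 + 1 = x + (α + β) + 2 by ring]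
    ring
  have p2 : x * poch (-(x - 1)) j = - (poch (-x) j * (-x + j)) := by
    rw [← poch_succ', poch_left', show -x + 1 = -(x - 1) by ring]
    ring
  unfold numR
  rw [poch_succ', poch_succ', show x - 1 + (α + β) + 2 = x + (α + β) + 1 by ring]
  generalize poch (x + (α + β) + 2) j = v2 at *
  generalize poch (x + (α + β) + 1) j = v at *
  generalize poch (-(x - 1)) j = u2 at *
  generalize poch (-x) j = u at *
  have q1 : (x + 2 + β + δ) * (x + α + 1) * (x + β + δ + 1) * (x + α + β + 1) /
      ((2 * x + α + β + 1) * (2 * x + α + β + 2)) *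
      (-((j : ℝ) + 1) * (2 * x + (α + β) + 2) * (u * v2)) =
      -((j : ℝ) + 1) * (x + 2 + β + δ) * (x + α + 1) * (x + β + δ + 1) /
      (2 * x + α + β + 1) * u * (v * (x + (α + β) + 1 + j)) := by
    rw [p1, show 2 * x + (α + β) + 2 = 2 * x + α + β + 2 by ring]
    generalize 2 * x + α + β + 2 = w2 at *
    generalize 2 * x + α + β + 1 = w1 at *
    field_simp
  have q2 : x * (x - 1 + α - δ) * (x + α - δ) * (x + β) /
      ((2 * x + α + β) * (2 * x + α + β + 1)) *
      (-((j : ℝ) + 1) * (2 * (x - 1) + (α + β) + 2) * (u2 * v)) =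
      ((j : ℝ) + 1) * (x - 1 + α - δ) * (x + α - δ) * (x + β) /
      (2 * x + α + β + 1) * v * (u * (-x + j)) := by
    have : u * (-x + j) = - (x * u2) := by rw [p2]; ring
    rw [this, show 2 * (x - 1) + (α + β) + 2 = 2 * x + α + β by ring]
    generalize 2 * x + α + β + 1 = w1 at *
    generalize 2 * x + α + β = w0 at *
    field_simp
  rw [q1, q2]
  rw [div_mul_eq_mul_div, div_mul_eq_mul_div, div_mul_eq_mul_div, div_mul_eq_mul_div,
    ← sub_div, div_add' _ _ _ h1, div_eq_iff h1]
  ring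

theorem phi_succ (y c : ℝ) (k : ℕ) :
    phiR y c (k + 1) = phiR y c k * ((k - y) * (y + c + k)) := by
  unfold phiR
  rw [poch_succ', poch_succ']
  ring

/-- Contiguity relation for the Racah functions: for `0 ≤ n, m ≤ 𝒩`,
`λ̃(m)·r_n(m; α, β, −𝒩−1, δ) = E_n·r̃_{n+1}(m) + F_n·r̃_n(m) + G_n·r̃_{n−1}(m)`,
where `r̃_n(m) = r_n(m; α, β, −𝒩−2, δ+1)` and `r̃_{−1} := 0`. -/
theorem stmt13 (𝒩 : ℕ) (h𝒩 : 0 < 𝒩) (α β δ : ℝ)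
    (hden1 : ∀ k ≤ 𝒩 + 1, poch (α + 1) k ≠ 0)
    (hden2 : ∀ k ≤ 𝒩 + 1, poch (β + δ + 1) k ≠ 0)
    (hden3 : ∀ n ≤ 𝒩, ∀ j : ℕ, j ≤ 2 → 2 * (n : ℝ) + α + β + (j : ℝ) ≠ 0) :
    ∀ n m : ℕ, n ≤ 𝒩 → m ≤ 𝒩 →
      lamTilde 𝒩 β δ m * racah 𝒩 α β δ n m =
        coeffE α β δ n * racah (𝒩 + 1) α β (δ + 1) (n + 1) m
        + coeffF α β δ n * racah (𝒩 + 1) α β (δ + 1) n m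
        + coeffG α β δ n * (if n = 0 then 0 else racah (𝒩 + 1) α β (δ + 1) (n - 1) m) := by
  intro n m hn hm
  have hN1 : (𝒩 : ℝ) + 1 ≠ 0 := by positivity
  have hB : β + δ + 1 ≠ 0 := by
    have := hden2 1 (by omega)
    rw [poch_succ', poch_zero'] at this
    simpa using this
  have h0 : 2 * (n : ℝ) + α + β ≠ 0 := by simpa using hden3 n hn 0 (by omega)
  have h1 : 2 * (n : ℝ) + α + β + 1 ≠ 0 := by simpa using hden3 n hn 1 (by omega)
  have h2 : 2 * (n : ℝ) + α + β + 2 ≠ 0 := by simpa using hden3 n hn 2 (by omega)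
  set D : ℕ → ℝ := denR (𝒩 + 1) α β (δ + 1) with hD
  set φ : ℕ → ℝ := phiR m (δ - 𝒩) with hφ
  have hcast : (δ + 1 - ((𝒩 + 1 : ℕ) : ℝ)) = δ - 𝒩 := by push_cast; ring
  have r1 : racah (𝒩 + 1) α β (δ + 1) (n + 1) m =
      ∑ k ∈ Finset.range (n + 2), numR ((n : ℝ) + 1) (α + β) k / D k * φ k := by
    rw [racah_ext _ _ _ _ _ _ (n + 2) le_rfl, hcast]
    push_cast
    rfl
  have r2 : racah (𝒩 + 1) α β (δ + 1) n m =
      ∑ k ∈ Finset.range (n + 2), numR (n : ℝ) (α + β) k / D k * φ k := by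
    rw [racah_ext _ _ _ _ _ _ (n + 2) (by omega), hcast]
  have r3 : coeffG α β δ n * (if n = 0 then 0 else racah (𝒩 + 1) α β (δ + 1) (n - 1) m) =
      coeffG α β δ n *
        ∑ k ∈ Finset.range (n + 2), numR ((n : ℝ) - 1) (α + β) k / D k * φ k := by
    by_cases hn0 : n = 0
    · subst hn0
      simp [coeffG]
    · rw [if_neg hn0, racah_ext _ _ _ _ _ _ (n + 2) (by omega), hcast,
        Nat.cast_sub (by omega)]
      push_cast
      rfl
  rw [r1, r2, r3, racah_ext 𝒩 α β δ n m (n + 1) le_rfl]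
  set A : ℕ → ℝ := fun k => numR (n : ℝ) (α + β) k / denR 𝒩 α β δ k with hA
  have hlam : ∀ k : ℕ, lamTilde 𝒩 β δ m * (A k * φ k) =
      (β + δ + 1) / (𝒩 + 1) * A k * φ (k + 1) +
      (β + δ + 1) / (𝒩 + 1) * ((k + 1 + δ) * (𝒩 + 1 - k)) * A k * φ k := by
    intro k
    rw [hφ, phi_succ]
    unfold lamTilde
    field_simp
    ring
  have hAn : A (n + 1) = 0 := by
    simp only [hA, numR]
    rw [poch_neg_nat n (n + 1) (by omega)]
    simp
  have hL : lamTilde 𝒩 β δ m * ∑ k ∈ Finset.range (n + 1), A k * φ k =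
      ∑ k ∈ Finset.range (n + 1), ((β + δ + 1) / (𝒩 + 1) * A k * φ (k + 1) +
        (β + δ + 1) / (𝒩 + 1) * (((k + 1 : ℕ) + 1 + δ) * (𝒩 + 1 - (k + 1 : ℕ))) *
          A (k + 1) * φ (k + 1)) +
      (β + δ + 1) * (1 + δ) * A 0 * φ 0 := by
    rw [Finset.mul_sum, Finset.sum_congr rfl (fun k _ => hlam k), Finset.sum_add_distrib,
      Finset.sum_add_distrib]
    have := Finset.sum_range_succ' (fun k : ℕ =>
      (β + δ + 1) / (𝒩 + 1) * ((k + 1 + δ) * (𝒩 + 1 - k)) * A k * φ k) (n + 1)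
    rw [Finset.sum_range_succ, hAn] at this
    simp only [mul_zero, zero_mul, add_zero] at this
    rw [this, ← add_assoc]
    congr 1
    push_cast
    field_simp
    ring
  have hR : ∀ k, coeffE α β δ n * (numR ((n : ℝ) + 1) (α + β) k / D k * φ k) +
      coeffF α β δ n * (numR (n : ℝ) (α + β) k / D k * φ k) +
      coeffG α β δ n * (numR ((n : ℝ) - 1) (α + β) k / D k * φ k) =
      (coeffE α β δ n * (numR ((n : ℝ) + 1) (α + β) k - numR (n : ℝ) (α + β) k)
      - coeffG α β δ n * (numR (n : ℝ) (α + β) k - numR ((n : ℝ) - 1) (α + β) k)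
      + (δ + 1) * (β + δ + 1) * numR (n : ℝ) (α + β) k) / D k * φ k := by
    intro k
    unfold coeffF
    ring
  refine hL.trans ?_
  rw [Finset.mul_sum, Finset.mul_sum, Finset.mul_sum, ← Finset.sum_add_distrib,
    ← Finset.sum_add_distrib, Finset.sum_congr rfl (fun k _ => hR k),
    Finset.sum_range_succ' _ (n + 1)]
  congr 1
  · apply Finset.sum_congr rfl
    intro j hj
    have hjn : j ≤ n := by
      have := Finset.mem_range.1 hj
      omega
    by_cases hjN : j = 𝒩
    · have : φ (j + 1) = 0 := by
        simp only [hφ, phiR]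
        rw [poch_neg_nat m (j + 1) (by omega)]
        simp
      rw [this]
      simp
    have hjN' : j + 1 ≤ 𝒩 := by omega
    rw [← add_mul]
    congr 1
    have kk := key_num (n : ℝ) α β δ j h0 h1 h2
    unfold coeffE coeffG
    rw [kk]
    have hAs : numR (n : ℝ) (α + β) (j + 1) =
        numR (n : ℝ) (α + β) j * ((-(n : ℝ) + j) * (n + α + β + 1 + j)) := by
      unfold numR
      rw [poch_succ', poch_succ']
      ring
    have a1 := hden1 (j + 1) (by omega)
    have b1 := hden2 (j + 2) (by omega)
    have d1 := poch_neg_nat_ne 𝒩 (j + 1) hjN'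
    have f1 : (Nat.factorial j : ℝ) ≠ 0 := by positivity
    have f2 : (j : ℝ) + 1 ≠ 0 := by positivity
    have bb : poch (β + (δ + 1) + 1) (j + 1) =
        poch (β + δ + 1) j * (β + δ + 1 + j) * (β + δ + 2 + j) / (β + δ + 1) := by
      rw [eq_div_iff hB, mul_comm, show β + (δ + 1) + 1 = β + δ + 1 + 1 by ring,
        ← poch_left', poch_succ', poch_succ']
      push_cast
      ring
    have dd : poch (-((𝒩 + 1 : ℕ) : ℝ)) (j + 1) = -(𝒩 + 1) * poch (-(𝒩 : ℝ)) j := by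
      rw [poch_left']
      push_cast
      rw [show -((𝒩 : ℝ) + 1) + 1 = -𝒩 by ring]
    simp only [hA, hD, denR]
    rw [bb, dd, hAs]
    rw [poch_succ'] at a1 d1
    rw [poch_succ', poch_succ'] at b1
    rw [poch_succ', poch_succ', poch_succ', Nat.factorial_succ]
    push_cast at *
    have a2 := left_ne_zero_of_mul a1
    have a3 := right_ne_zero_of_mul a1
    have d2 := left_ne_zero_of_mul d1
    have d3 := right_ne_zero_of_mul d1
    have b2 := left_ne_zero_of_mul (left_ne_zero_of_mul b1)
    have b3 := right_ne_zero_of_mul (left_ne_zero_of_mul b1)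
    have b4 := right_ne_zero_of_mul b1
    have b5 : β + δ + 2 + j ≠ 0 := by
      intro h
      apply b4
      linarith
    clear kk hL hR hlam hAn r1 r2 r3 hAs bb dd
    generalize poch (α + 1) j = a at *
    generalize poch (β + δ + 1) j = b at *
    generalize poch (-(𝒩 : ℝ)) j = d at *
    generalize numR (n : ℝ) (α + β) j = u at *
    have d4 : (𝒩 : ℝ) - j ≠ 0 := by
      intro h
      apply d3
      linarith
    rw [show -(𝒩 : ℝ) + j = -(𝒩 - j) by ring, show (𝒩 : ℝ) + 1 - (j + 1) = 𝒩 - j by ring]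
    generalize (𝒩 : ℝ) - j = w at *
    field_simp
    ring
  · simp only [hA, hD, denR, numR, poch_zero', Nat.factorial_zero, Nat.cast_one]
    ring
end
end

section
/- (Unitarity of the Tratnik functions.) Under the stated hypotheses, for all integers n₁, n₂, n₁', n₂' ≥ 0 with n₁+n₂ ≤ N and n₁'+n₂' ≤ N: Σ_{m₁,m₂ ≥ 0, m₁+m₂ ≤ N} 𝒯_{n₁,n₂}(m₁,m₂)·𝒯_{n₁',n₂'}(m₁,m₂) = δ_{n₁,n₁'}·δ_{n₂,n₂'}; and dually, for all integers m₁, m₂, m₁', m₂' ≥ 0 with m₁+m₂ ≤ N and m₁'+m₂' ≤ N: Σ_{n₁,n₂ ≥ 0, n₁+n₂ ≤ N} 𝒯_{n₁,n₂}(m₁,m₂)·𝒯_{n₁,n₂}(m₁',m₂') = δ_{m₁,m₁'}·δ_{m₂,m₂'}. -/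
noncomputable section

open Finset Real

/-- Coefficient `A_n` of the Racah recurrence relation. -/
def coeffA (𝒩 : ℕ) (α β δ : ℝ) (n : ℕ) : ℝ :=
  ((n : ℝ) + α + 1) * ((n : ℝ) + β + δ + 1) * ((n : ℝ) - (𝒩 : ℝ)) * ((n : ℝ) + α + β + 1) /
    ((2 * (n : ℝ) + α + β + 1) * (2 * (n : ℝ) + α + β + 2))

/-- Coefficient `C_n` of the Racah recurrence relation. -/
def coeffC (𝒩 : ℕ) (α β δ : ℝ) (n : ℕ) : ℝ :=
  (n : ℝ) * ((n : ℝ) + α + β + (𝒩 : ℝ) + 1) * ((n : ℝ) + α - δ) * ((n : ℝ) + β) /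
    ((2 * (n : ℝ) + α + β) * (2 * (n : ℝ) + α + β + 1))

/-- Coefficient `B_m` of the Racah difference relation. -/
def coeffB (𝒩 : ℕ) (α β δ : ℝ) (m : ℕ) : ℝ :=
  ((m : ℝ) + α + 1) * ((m : ℝ) + β + δ + 1) * ((m : ℝ) - (𝒩 : ℝ)) * ((m : ℝ) - (𝒩 : ℝ) + δ) /
    ((2 * (m : ℝ) - (𝒩 : ℝ) + δ) * (2 * (m : ℝ) - (𝒩 : ℝ) + δ + 1))

/-- Coefficient `D_m` of the Racah difference relation. -/
def coeffD (𝒩 : ℕ) (α β δ : ℝ) (m : ℕ) : ℝ :=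
  (m : ℝ) * ((m : ℝ) - (𝒩 : ℝ) - 1 - α + δ) * ((m : ℝ) - (𝒩 : ℝ) - 1 - β) * ((m : ℝ) + δ) /
    ((2 * (m : ℝ) - (𝒩 : ℝ) - 1 + δ) * (2 * (m : ℝ) - (𝒩 : ℝ) + δ))

/-- Normalization constant `κ = (α−δ+1)_𝒩 (β+1)_𝒩 / ((α+β+2)_𝒩 (−δ)_𝒩)`. -/
def kappa (𝒩 : ℕ) (α β δ : ℝ) : ℝ :=
  poch (α - δ + 1) 𝒩 * poch (β + 1) 𝒩 / (poch (α + β + 2) 𝒩 * poch (-δ) 𝒩)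

/-- The orthonormalized Racah function `𝒫_n(m; α, β, −𝒩−1, δ)`. -/
def Pfun (𝒩 : ℕ) (α β δ : ℝ) (n m : ℕ) : ℝ :=
  Real.sqrt (kappa 𝒩 α β δ) *
    (∏ i ∈ Finset.range n,
      coeffA 𝒩 α β δ i / Real.sqrt (coeffA 𝒩 α β δ i * coeffC 𝒩 α β δ (i + 1))) *
    (∏ j ∈ Finset.range m,
      coeffB 𝒩 α β δ j / Real.sqrt (coeffB 𝒩 α β δ j * coeffD 𝒩 α β δ (j + 1))) *
    racah 𝒩 α β δ n m

/-- The positivity conditions making `𝒫_·(·; α, β, −𝒩−1, δ)` well defined. -/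
def PosCond (𝒩 : ℕ) (α β δ : ℝ) : Prop :=
  (∀ i < 𝒩, 0 < coeffA 𝒩 α β δ i * coeffC 𝒩 α β δ (i + 1)) ∧
  (∀ j < 𝒩, 0 < coeffB 𝒩 α β δ j * coeffD 𝒩 α β δ (j + 1)) ∧
  0 < kappa 𝒩 α β δ

/-- The bivariate Tratnik function
`𝒯_{n₁,n₂}(m₁,m₂) = 𝒫_{n₁}(m₁; −2j⁽²⁾−1, −2j⁽¹⁾−1, n₂−N−1, N−n₂−2j⁽²⁾+2j⁽³⁾+1)
· 𝒫_{n₂}(m₂; −2j⁽⁰⁾−1, −2j⁽⁴⁾−1, m₁−N−1, N−m₁−2j⁽⁰⁾−2j⁽¹⁾−1)`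
for admissible indices, and `0` outside the admissible range. -/
def Tratnik (j0 j1 j2 j3 j4 : ℝ) (N : ℕ) (n1 n2 m1 m2 : ℕ) : ℝ :=
  if n1 + n2 ≤ N ∧ m1 + m2 ≤ N ∧ n2 + m1 ≤ N then
    Pfun (N - n2) (-2*j2 - 1) (-2*j1 - 1) ((N : ℝ) - n2 - 2*j2 + 2*j3 + 1) n1 m1 *
      Pfun (N - m1) (-2*j0 - 1) (-2*j4 - 1) ((N : ℝ) - m1 - 2*j0 - 2*j1 - 1) n2 m2
  else 0



namespace RacahAux

def psi (s x : ℝ) (k : ℕ) : ℝ := ∏ i ∈ Finset.range k, (((i : ℝ) - x) * ((i : ℝ) + x + s))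

def cB (s p q : ℝ) (M m : ℕ) : ℝ :=
  ((m : ℝ) + p) * ((m : ℝ) + q) * ((m : ℝ) - M) * ((m : ℝ) + s) / ((2 * (m : ℝ) + s) * (2 * (m : ℝ) + s + 1))

def cD (s p q : ℝ) (M m : ℕ) : ℝ :=
  (m : ℝ) * ((m : ℝ) + s - p) * ((m : ℝ) + s - q) * ((m : ℝ) + s + M) /
    ((2 * (m : ℝ) - 1 + s) * (2 * (m : ℝ) + s))

def den (p q : ℝ) (M k : ℕ) : ℝ :=
  ∏ i ∈ Finset.range k, (((i : ℝ) + p) * ((i : ℝ) + q) * ((i : ℝ) - M) * ((i : ℝ) + 1))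

def G (s t p q : ℝ) (M n m : ℕ) : ℝ :=
  ∑ k ∈ Finset.range (M + 1), psi t n k * psi s m k / den p q M k

def Nd (s p q : ℝ) (M : ℕ) : Prop := ∀ m < M, cB s p q M m ≠ 0 ∧ cD s p q M (m + 1) ≠ 0

def wt (s p q : ℝ) (M m : ℕ) : ℝ := ∏ j ∈ Finset.range m, (cB s p q M j / cD s p q M (j + 1))

/-- second-order difference operator -/
def Lop (s p q : ℝ) (M : ℕ) (f : ℕ → ℝ) (m : ℕ) : ℝ :=
  cB s p q M m * (f (m + 1) - f m) - cD s p q M m * (f m - f (m - 1))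

lemma G_symm (s t p q : ℝ) (M n m : ℕ) : G s t p q M n m = G t s p q M m n := by
  unfold G
  refine Finset.sum_congr rfl fun k _ => by rw [mul_comm (psi t _ _)]

lemma psi_succ (s x : ℝ) (k : ℕ) :
    psi s x (k + 1) = psi s x k * (((k : ℝ) - x) * ((k : ℝ) + x + s)) := by
  unfold psi; rw [Finset.prod_range_succ]

lemma psi_fwd (s x : ℝ) (k : ℕ) :
    (x + s) * psi s (x + 1) (k + 1) = -(1 + x) * (k + 1 + x + s) * (x + s + k) * psi s x k := by
  induction k with
  | zero => simp [psi]; ring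
  | succ k ih =>
    rw [psi_succ s (x + 1), psi_succ s x]
    push_cast
    linear_combination (((k : ℝ) + 1 - (x + 1)) * ((k : ℝ) + 1 + (x + 1) + s)) * ih

lemma psi_bwd (s x : ℝ) (k : ℕ) :
    x * psi s (x - 1) (k + 1) = -(k + 1 - x) * (k - x) * (x - 1 + s) * psi s x k := by
  induction k with
  | zero => simp [psi]; ring
  | succ k ih =>
    rw [psi_succ s (x - 1), psi_succ s x]
    push_cast
    linear_combination (((k : ℝ) + 1 - (x - 1)) * ((k : ℝ) + 1 + (x - 1) + s)) * ih

lemma psi_zero_of_lt (s : ℝ) {m k : ℕ} (h : m < k) : psi s m k = 0 := by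
  unfold psi
  exact Finset.prod_eq_zero (Finset.mem_range.2 h) (by simp)

lemma nd_ne {s p q : ℝ} {M : ℕ} (h : Nd s p q M) {m : ℕ} (hm : m < M) :
    (m : ℝ) + p ≠ 0 ∧ (m : ℝ) + q ≠ 0 ∧ (m : ℝ) - M ≠ 0 ∧ (m : ℝ) + s ≠ 0 ∧ 2 * (m : ℝ) + s ≠ 0 ∧
    2 * (m : ℝ) + s + 1 ≠ 0 ∧ (m : ℝ) + 1 + s - p ≠ 0 ∧ (m : ℝ) + 1 + s - q ≠ 0 ∧
    (m : ℝ) + 1 + s + M ≠ 0 ∧ 2 * (m : ℝ) + 2 + s ≠ 0 := by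
  obtain ⟨h1, h2⟩ := h m hm
  unfold cB at h1
  unfold cD at h2
  have h3 : (2 * ((m + 1 : ℕ) : ℝ) + s) = 2 * (m : ℝ) + 2 + s := by push_cast; ring
  rw [h3] at h2
  push_cast at h2
  simp only [ne_eq, div_eq_zero_iff, mul_eq_zero, not_or] at h1 h2
  tauto

lemma hlp1 (a y c d e : ℝ) (hd : d ≠ 0) : a * y / (d * e) * c * d = a * (y * c) / e := by
  field_simp

lemma hlp2 (x u v w c d e : ℝ) (hd : d ≠ 0) :
    x * u * v * w / (e * d) * c * d = u * v * w * (x * c) / e := by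
  field_simp

lemma psi_diff (s t p q : ℝ) (M : ℕ) (hM : 0 < M) (h : Nd s p q M)
    (hst : s + t + M + 1 = p + q) (m : ℕ) (hm : m ≤ M) (k : ℕ) :
    Lop s p q M (fun m => psi s m (k + 1)) m =
      (k + 1) * (k + 1 + t) * psi s m (k + 1) -
        (k + 1) * ((k + p) * (k + q) * (k - M)) * psi s m k := by
  have h2 : 2 * (m : ℝ) + s ≠ 0 := by
    rcases hm.lt_or_eq with h' | h'
    · exact (nd_ne h h').2.2.2.2.1
    · obtain ⟨l, rfl⟩ : ∃ l, m = l + 1 := ⟨m - 1, by omega⟩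
      have := (nd_ne h (show l < M by omega)).2.2.2.2.2.2.2.2.2
      push_cast
      intro hc; apply this; linarith
  have hB : cB s p q M m * (psi s ((m + 1 : ℕ) : ℝ) (k + 1) - psi s m (k + 1)) * (2 * m + s) =
      -(k + 1) * (m + p) * (m + q) * (m - M) * (m + s + k) * psi s m k := by
    rcases hm.lt_or_eq with h' | h'
    · have h3 := (nd_ne h h').2.2.2.2.2.1
      have e : ((m : ℝ) + s) * (psi s ((m : ℝ) + 1) (k + 1) - psi s m (k + 1)) =
          -(k + 1) * (2 * m + s + 1) * (m + s + k) * psi s m k := by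
        have := psi_fwd s m k
        rw [psi_succ s m k]
        linear_combination this
      have e2 : cB s p q M m * (psi s ((m + 1 : ℕ) : ℝ) (k + 1) - psi s m (k + 1)) * (2 * m + s) =
        (m + p) * (m + q) * (m - M) * (((m : ℝ) + s) * (psi s ((m : ℝ) + 1) (k + 1) - psi s m (k + 1))) / (2 * m + s + 1) := by
        unfold cB; push_cast; exact hlp1 _ _ _ _ _ h2
      rw [e2, e, div_eq_iff h3]; ring
    · subst h'; simp [cB]
  have hD : cD s p q M m * (psi s m (k + 1) - psi s ((m - 1 : ℕ) : ℝ) (k + 1)) * (2 * m + s) =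
      (k + 1) * (m + s - p) * (m + s - q) * (m + s + M) * (k - m) * psi s m k := by
    rcases Nat.eq_zero_or_pos m with h' | h'
    · subst h'
      have : ((k : ℝ) - ((0 : ℕ) : ℝ)) * psi s ((0 : ℕ) : ℝ) k = 0 := by
        rcases Nat.eq_zero_or_pos k with h'' | h''
        · subst h''; simp
        · rw [psi_zero_of_lt s h'']; simp
      have e0 : cD s p q M 0 = 0 := by simp [cD]
      rw [e0, mul_assoc _ (_ - _) (psi _ _ _), this]; simp
    · obtain ⟨l, rfl⟩ : ∃ l, m = l + 1 := ⟨m - 1, by omega⟩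
      have h3 : 2 * ((l + 1 : ℕ) : ℝ) - 1 + s ≠ 0 := by
        have := (nd_ne h (show l < M by omega)).2.2.2.2.2.1
        push_cast
        intro hc; apply this; linarith
      have e3 : ((l + 1 - 1 : ℕ) : ℝ) = ((l + 1 : ℕ) : ℝ) - 1 := by simp
      rw [e3]
      unfold cD
      generalize ((l + 1 : ℕ) : ℝ) = x at *
      have e : x * (psi s x (k + 1) - psi s (x - 1) (k + 1)) =
          (k + 1) * (2 * x - 1 + s) * (k - x) * psi s x k := by
        have := psi_bwd s x k
        rw [psi_succ s x k]
        linear_combination -this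
      have e2 : x * (x + s - p) * (x + s - q) * (x + s + M) / ((2 * x - 1 + s) * (2 * x + s)) *
          (psi s x (k + 1) - psi s (x - 1) (k + 1)) * (2 * x + s) =
          (x + s - p) * (x + s - q) * (x + s + M) *
            (x * (psi s x (k + 1) - psi s (x - 1) (k + 1))) / (2 * x - 1 + s) := by
        exact hlp2 _ _ _ _ _ _ _ h2
      rw [e2, e, div_eq_iff h3]; ring
  unfold Lop
  simp only
  apply mul_right_cancel₀ h2
  rw [sub_mul, hB, hD, psi_succ]
  have : t = p + q - s - M - 1 := by linarith
  subst this
  ring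

lemma den_succ (p q : ℝ) (M k : ℕ) : den p q M (k + 1) = den p q M k *
    (((k : ℝ) + p) * ((k : ℝ) + q) * ((k : ℝ) - M) * ((k : ℝ) + 1)) := by
  unfold den; rw [Finset.prod_range_succ]

lemma den_ne {s p q : ℝ} {M : ℕ} (h : Nd s p q M) {k : ℕ} (hk : k ≤ M) : den p q M k ≠ 0 := by
  unfold den
  rw [Finset.prod_ne_zero_iff]
  intro i hi
  have hi' : i < M := lt_of_lt_of_le (Finset.mem_range.1 hi) hk
  obtain ⟨h1, h2, h3, _⟩ := nd_ne h hi'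
  have : (i : ℝ) + 1 ≠ 0 := by positivity
  positivity

lemma Lop_sum (s p q : ℝ) (M m : ℕ) (S : Finset ℕ) (c : ℕ → ℝ) (f : ℕ → ℕ → ℝ) :
    Lop s p q M (fun m => ∑ k ∈ S, c k * f k m) m = ∑ k ∈ S, c k * Lop s p q M (f k) m := by
  unfold Lop
  simp only [mul_sub, Finset.sum_sub_distrib, Finset.mul_sum]
  simp only [mul_left_comm]

lemma eig (s t p q : ℝ) (M : ℕ) (hM : 0 < M) (h : Nd s p q M)
    (hst : s + t + M + 1 = p + q) (n m : ℕ) (hn : n ≤ M) (hm : m ≤ M) :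
    Lop s p q M (G s t p q M n) m = n * (n + t) * G s t p q M n m := by
  have e1 : G s t p q M n = fun m => ∑ k ∈ Finset.range (M + 1),
      (psi t n k / den p q M k) * (fun k (m : ℕ) => psi s m k) k m := by
    funext m; unfold G; refine Finset.sum_congr rfl fun k _ => by ring
  rw [e1, Lop_sum]
  rw [Finset.sum_range_succ']
  have z : Lop s p q M (fun m => psi s (m : ℝ) 0) m = 0 := by simp [Lop, psi]
  simp only
  rw [z, mul_zero, add_zero, Finset.mul_sum]
  have e2 : ∀ k ∈ Finset.range M, psi t n (k + 1) / den p q M (k + 1) * Lop s p q M (fun m => psi s m (k + 1)) m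
     = (k + 1 : ℕ) * ((k + 1 : ℕ) + t) * (psi t n (k + 1) / den p q M (k + 1) * psi s m (k + 1))
       - psi t n (k + 1) / den p q M k * psi s m k := by
    intro k hk
    have hk := Finset.mem_range.1 hk
    rw [psi_diff s t p q M hM h hst m hm]
    have d1 := den_ne h (show k ≤ M by omega)
    have d2 := den_ne h (show k + 1 ≤ M by omega)
    have : psi t n (k + 1) / den p q M k = psi t n (k + 1) / den p q M (k + 1) *
      (((k : ℝ) + p) * ((k : ℝ) + q) * ((k : ℝ) - M) * ((k : ℝ) + 1)) := by
      rw [div_mul_eq_mul_div, div_eq_div_iff d1 d2, den_succ]; ring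
    rw [this]; push_cast; ring
  rw [Finset.sum_congr rfl e2, Finset.sum_sub_distrib]
  have e3 : ∑ k ∈ Finset.range M, psi t n (k + 1) / den p q M k * psi s m k =
     ∑ k ∈ Finset.range (M + 1), psi t n (k + 1) / den p q M k * psi s m k := by
    rw [Finset.sum_range_succ, psi_zero_of_lt t (show n < M + 1 by omega)]; simp
  have e4 : ∑ k ∈ Finset.range M, ((k + 1 : ℕ) : ℝ) * ((k + 1 : ℕ) + t) * (psi t n (k + 1) / den p q M (k + 1) * psi s m (k + 1))
    = ∑ k ∈ Finset.range (M + 1), (k : ℝ) * (k + t) * (psi t n k / den p q M k * psi s m k) := by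
    rw [Finset.sum_range_succ']; simp
  rw [e3, e4, ← Finset.sum_sub_distrib]
  refine Finset.sum_congr rfl fun k _ => ?_
  rw [psi_succ]; ring

lemma wt_bal {s p q : ℝ} {M : ℕ} (h : Nd s p q M) {m : ℕ} (hm : m < M) :
    wt s p q M (m + 1) * cD s p q M (m + 1) = wt s p q M m * cB s p q M m := by
  unfold wt
  rw [Finset.prod_range_succ]
  have := (h m hm).2
  field_simp

lemma sbp {s p q : ℝ} {M : ℕ} (h : Nd s p q M) (f g : ℕ → ℝ) (K : ℕ) (hK : K ≤ M) :
    ∑ m ∈ Finset.range (K + 1), wt s p q M m * (Lop s p q M f m * g m) =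
      wt s p q M K * cB s p q M K * (f (K + 1) - f K) * g K
      - ∑ m ∈ Finset.range K, wt s p q M m * cB s p q M m * ((f (m + 1) - f m) * (g (m + 1) - g m)) := by
  induction K with
  | zero => simp [Lop, cD]; ring
  | succ K ih =>
    rw [Finset.sum_range_succ, ih (by omega), Finset.sum_range_succ _ K]
    have := wt_bal h (show K < M by omega)
    unfold Lop
    simp only [Nat.add_sub_cancel]
    linear_combination -((f (K + 1) - f K) * g (K + 1)) * this

lemma cB_top (s p q : ℝ) (M : ℕ) : cB s p q M M = 0 := by simp [cB]

lemma selfadj {s p q : ℝ} {M : ℕ} (h : Nd s p q M) (f g : ℕ → ℝ) :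
    ∑ m ∈ Finset.range (M + 1), wt s p q M m * (Lop s p q M f m * g m) =
    ∑ m ∈ Finset.range (M + 1), wt s p q M m * (Lop s p q M g m * f m) := by
  rw [sbp h f g M le_rfl, sbp h g f M le_rfl, cB_top]
  simp only [mul_zero, zero_mul]
  congr 1
  refine Finset.sum_congr rfl fun k _ => by ring

def ip (s t p q : ℝ) (M n n' : ℕ) : ℝ :=
  ∑ m ∈ Finset.range (M + 1), wt s p q M m * (G s t p q M n m * G s t p q M n' m)

lemma ip_comm (s t p q : ℝ) (M n n' : ℕ) : ip s t p q M n n' = ip s t p q M n' n := by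
  unfold ip; refine Finset.sum_congr rfl fun k _ => by ring

lemma t_ne {t p q : ℝ} {M : ℕ} (h : Nd t p q M) (j : ℕ) (h1 : 0 < j) (h2 : j < 2 * M) :
    (j : ℝ) + t ≠ 0 := by
  rcases Nat.even_or_odd' j with ⟨c, rfl | rfl⟩
  · have := (nd_ne h (show c < M by omega)).2.2.2.2.1
    push_cast; exact this
  · have := (nd_ne h (show c < M by omega)).2.2.2.2.2.1
    push_cast; intro hc; apply this; linarith

lemma orth (s t p q : ℝ) (M : ℕ) (hM : 0 < M) (h : Nd s p q M) (h' : Nd t p q M)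
    (hst : s + t + M + 1 = p + q) (n n' : ℕ) (hn : n ≤ M) (hn' : n' ≤ M) (hne : n ≠ n') :
    ip s t p q M n n' = 0 := by
  have key := selfadj h (G s t p q M n) (G s t p q M n')
  have e1 : ∀ a b : ℕ, a ≤ M → ∑ m ∈ Finset.range (M + 1), wt s p q M m * (Lop s p q M (G s t p q M a) m * G s t p q M b m)
     = a * (a + t) * ip s t p q M a b := by
    intro a b ha
    unfold ip
    rw [Finset.mul_sum]
    refine Finset.sum_congr rfl fun m hm => ?_
    rw [eig s t p q M hM h hst a m ha (by have := Finset.mem_range.1 hm; omega)]; ring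
  rw [e1 n n' hn, e1 n' n hn', ip_comm s t p q M n' n] at key
  have e2 : ((n : ℝ) - n') * (((n + n' : ℕ) : ℝ) + t) * ip s t p q M n n' = 0 := by
    push_cast; linear_combination key
  have e3 := t_ne h' (n + n') (by omega) (by omega)
  have e4 : (n : ℝ) - n' ≠ 0 := by rw [sub_ne_zero]; exact_mod_cast hne
  exact (mul_eq_zero.1 e2).resolve_left (mul_ne_zero e4 e3)

/-- three-term recurrence -/
lemma rec3 (s t p q : ℝ) (M : ℕ) (hM : 0 < M) (h' : Nd t p q M)
    (hst : s + t + M + 1 = p + q) (n m : ℕ) (hn : n ≤ M) (hm : m ≤ M) :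
    cB t p q M n * (G s t p q M (n + 1) m - G s t p q M n m) -
      cD t p q M n * (G s t p q M n m - G s t p q M (n - 1) m) = m * (m + s) * G s t p q M n m := by
  have := eig t s p q M hM h' (by linarith) m n hm hn
  unfold Lop at this
  simp only [G_symm s t]
  exact this

lemma norm_step (s t p q : ℝ) (M : ℕ) (hM : 0 < M) (h : Nd s p q M) (h' : Nd t p q M)
    (hst : s + t + M + 1 = p + q) (n : ℕ) (hn : n < M) :
    cB t p q M n * ip s t p q M (n + 1) (n + 1) = cD t p q M (n + 1) * ip s t p q M n n := by
  have o := orth s t p q M hM h h' hst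
  have e1 : ∑ m ∈ Finset.range (M + 1), wt s p q M m * ((m * (m + s) * G s t p q M n m) * G s t p q M (n + 1) m)
    = cB t p q M n * ip s t p q M (n + 1) (n + 1) := by
    have : ∑ m ∈ Finset.range (M + 1), wt s p q M m * ((m * (m + s) * G s t p q M n m) * G s t p q M (n + 1) m)
      = cB t p q M n * (ip s t p q M (n + 1) (n + 1) - ip s t p q M n (n + 1)) -
        cD t p q M n * (ip s t p q M n (n + 1) - ip s t p q M (n - 1) (n + 1)) := by
      simp only [ip, mul_sub, Finset.mul_sum, ← Finset.sum_sub_distrib]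
      refine Finset.sum_congr rfl fun m hm => ?_
      rw [← rec3 s t p q M hM h' hst n m (by omega) (by have := Finset.mem_range.1 hm; omega)]
      ring
    rw [this, o n (n + 1) (by omega) (by omega) (by omega), o (n - 1) (n + 1) (by omega) (by omega) (by omega)]
    ring
  have e2 : ∑ m ∈ Finset.range (M + 1), wt s p q M m * (G s t p q M n m * (m * (m + s) * G s t p q M (n + 1) m))
    = cD t p q M (n + 1) * ip s t p q M n n := by
    have : ∑ m ∈ Finset.range (M + 1), wt s p q M m * (G s t p q M n m * (m * (m + s) * G s t p q M (n + 1) m))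
      = cB t p q M (n + 1) * (ip s t p q M n (n + 2) - ip s t p q M n (n + 1)) -
        cD t p q M (n + 1) * (ip s t p q M n (n + 1) - ip s t p q M n n) := by
      simp only [ip, mul_sub, Finset.mul_sum, ← Finset.sum_sub_distrib]
      refine Finset.sum_congr rfl fun m hm => ?_
      rw [← rec3 s t p q M hM h' hst (n + 1) m (by omega) (by have := Finset.mem_range.1 hm; omega)]
      simp only [Nat.add_sub_cancel]
      ring
    rw [this, o n (n + 1) (by omega) (by omega) (by omega)]
    have : cB t p q M (n + 1) * ip s t p q M n (n + 2) = 0 := by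
      rcases Nat.lt_or_ge (n + 1) M with h1 | h1
      · rw [o n (n + 2) (by omega) (by omega) (by omega), mul_zero]
      · have : n + 1 = M := by omega
        rw [this, cB_top, zero_mul]
    linear_combination this
  rw [← e1, ← e2]
  refine Finset.sum_congr rfl fun m _ => by ring

lemma norm_n (s t p q : ℝ) (M : ℕ) (hM : 0 < M) (h : Nd s p q M) (h' : Nd t p q M)
    (hst : s + t + M + 1 = p + q) (n : ℕ) (hn : n ≤ M) :
    wt t p q M n * ip s t p q M n n = ip s t p q M 0 0 := by
  induction n with
  | zero => simp [wt]
  | succ n ih =>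
    rw [← ih (by omega)]
    have := norm_step s t p q M hM h h' hst n (by omega)
    have hd := (h' n (by omega)).2
    have e : wt t p q M (n + 1) = wt t p q M n * (cB t p q M n / cD t p q M (n + 1)) := by
      unfold wt; rw [Finset.prod_range_succ]
    rw [e]
    field_simp
    linear_combination wt t p q M n * this

lemma moment (s t p q : ℝ) (M : ℕ) (hM : 0 < M) (h : Nd s p q M)
    (hst : s + t + M + 1 = p + q) (k : ℕ) :
    (k + 1 + t) * ∑ m ∈ Finset.range (M + 1), wt s p q M m * psi s m (k + 1) =
    ((k + p) * (k + q) * (k - M)) * ∑ m ∈ Finset.range (M + 1), wt s p q M m * psi s m k := by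
  have e := sbp h (fun m => psi s m (k + 1)) (fun _ => 1) M le_rfl
  rw [cB_top] at e
  simp only [mul_zero, zero_mul, sub_self, Finset.sum_const_zero, mul_one] at e
  have e2 : ∑ m ∈ Finset.range (M + 1), wt s p q M m * Lop s p q M (fun m => psi s m (k + 1)) m
     = (k + 1) * ((k + 1 + t) * ∑ m ∈ Finset.range (M + 1), wt s p q M m * psi s m (k + 1) -
    ((k + p) * (k + q) * (k - M)) * ∑ m ∈ Finset.range (M + 1), wt s p q M m * psi s m k) := by
    simp only [mul_sub, Finset.mul_sum, ← Finset.sum_sub_distrib]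
    refine Finset.sum_congr rfl fun m hm => ?_
    rw [psi_diff s t p q M hM h hst m (by have := Finset.mem_range.1 hm; omega)]
    ring
  rw [e2] at e
  have : (k : ℝ) + 1 ≠ 0 := by positivity
  have := (mul_eq_zero.1 e).resolve_left this
  linarith

lemma moments (s t p q : ℝ) (M : ℕ) (hM : 0 < M) (h : Nd s p q M)
    (hst : s + t + M + 1 = p + q) (k : ℕ) :
    (∏ i ∈ Finset.range k, ((i : ℝ) + 1 + t)) * ∑ m ∈ Finset.range (M + 1), wt s p q M m * psi s m k =
    (∏ i ∈ Finset.range k, (((i : ℝ) + p) * (i + q) * (i - M))) * ∑ m ∈ Finset.range (M + 1), wt s p q M m := by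
  induction k with
  | zero => simp [psi]
  | succ k ih =>
    rw [Finset.prod_range_succ, Finset.prod_range_succ]
    linear_combination (∏ i ∈ Finset.range k, ((i : ℝ) + 1 + t)) * moment s t p q M hM h hst k +
      ((k + p) * (k + q) * (k - M)) * ih

lemma ip00 (s t p q : ℝ) (M : ℕ) : ip s t p q M 0 0 = ∑ m ∈ Finset.range (M + 1), wt s p q M m := by
  unfold ip
  refine Finset.sum_congr rfl fun m _ => ?_
  have : G s t p q M 0 m = 1 := by
    unfold G
    rw [Finset.sum_range_succ']
    rw [Finset.sum_eq_zero]
    · simp [psi, den]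
    · intro k _
      rw [psi_zero_of_lt t (Nat.succ_pos k)]; simp
  rw [this]; ring

lemma sum_wt (s t p q : ℝ) (M : ℕ) (hM : 0 < M) (h : Nd s p q M)
    (hst : s + t + M + 1 = p + q) :
    (∏ i ∈ Finset.range M, ((i : ℝ) + 1 + t)) * (wt s p q M M * psi s M M) =
    (∏ i ∈ Finset.range M, (((i : ℝ) + p) * (i + q) * (i - M))) * ip s t p q M 0 0 := by
  rw [ip00, ← moments s t p q M hM h hst M]
  congr 1
  rw [Finset.sum_range_succ, Finset.sum_eq_zero, zero_add]
  intro m hm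
  rw [psi_zero_of_lt s (Finset.mem_range.1 hm), mul_zero]

lemma prod_refl_neg (M : ℕ) (c : ℝ) :
    ∏ j ∈ Finset.range M, ((j : ℝ) - M - c) = (-1) ^ M * ∏ j ∈ Finset.range M, (c + 1 + j) := by
  have e1 : ((-1 : ℝ)) ^ M = ∏ j ∈ Finset.range M, (-1 : ℝ) := by simp
  rw [e1, ← Finset.prod_mul_distrib, ← Finset.prod_range_reflect]
  refine Finset.prod_congr rfl fun j hj => ?_
  have hj := Finset.mem_range.1 hj
  have : ((M - 1 - j : ℕ) : ℝ) = M - 1 - j := by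
    rw [Nat.cast_sub (by omega), Nat.cast_sub (by omega)]; simp
  rw [this]; ring

lemma prod_tel (M : ℕ) (f : ℕ → ℝ) :
    (∏ j ∈ Finset.range M, f (j + 1)) * f 0 = (∏ j ∈ Finset.range M, f j) * f M := by
  rw [← Finset.prod_range_succ, Finset.prod_range_succ']

end RacahAux

namespace RacahAux

lemma poch_neg (M : ℕ) (c : ℝ) :
    ∏ j ∈ Finset.range M, ((j : ℝ) - M - c) = (-1) ^ M * poch (c + 1) M := prod_refl_neg M c

lemma coeffB_eq (M : ℕ) (α β δ : ℝ) (m : ℕ) :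
    coeffB M α β δ m = cB (δ - M) (α + 1) (β + δ + 1) M m := by
  unfold coeffB cB
  congr 1 <;> ring

lemma coeffD_eq (M : ℕ) (α β δ : ℝ) (m : ℕ) :
    coeffD M α β δ m = cD (δ - M) (α + 1) (β + δ + 1) M m := by
  unfold coeffD cD
  congr 1 <;> ring

lemma coeffA_eq (M : ℕ) (α β δ : ℝ) (m : ℕ) :
    coeffA M α β δ m = cB (α + β + 1) (α + 1) (β + δ + 1) M m := by
  unfold coeffA cB
  congr 1 <;> ring

lemma coeffC_eq (M : ℕ) (α β δ : ℝ) (m : ℕ) :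
    coeffC M α β δ m = cD (α + β + 1) (α + 1) (β + δ + 1) M m := by
  unfold coeffC cD
  congr 1 <;> ring

lemma racah_eq (M : ℕ) (α β δ : ℝ) (n m : ℕ) (hn : n ≤ M) :
    racah M α β δ n m = G (δ - M) (α + β + 1) (α + 1) (β + δ + 1) M n m := by
  unfold racah G
  have hsub : Finset.range (n + 1) ⊆ Finset.range (M + 1) :=
    Finset.range_subset_range.2 (by omega)
  rw [← Finset.sum_subset hsub]
  · refine Finset.sum_congr rfl fun k _ => ?_
    have ef : (Nat.factorial k : ℝ) = ∏ i ∈ Finset.range k, ((i : ℝ) + 1) := by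
      rw [← Finset.prod_range_add_one_eq_factorial]; push_cast; rfl
    rw [ef]
    unfold poch psi den
    simp only [← Finset.prod_mul_distrib]
    congr 1
    · exact Finset.prod_congr rfl fun i _ => by ring
    · exact Finset.prod_congr rfl fun i _ => by ring
  · intro k _ hk
    have : n < k := by simpa using hk
    rw [psi_zero_of_lt _ this]; simp

lemma kappa_mul (M : ℕ) (hM : 0 < M) (α β δ : ℝ)
    (h : Nd (δ - M) (α + 1) (β + δ + 1) M) (h' : Nd (α + β + 1) (α + 1) (β + δ + 1) M)
    (hk : 0 < kappa M α β δ) :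
    kappa M α β δ * ip (δ - M) (α + β + 1) (α + 1) (β + δ + 1) M 0 0 = 1 := by
  have key := sum_wt (δ - M) (α + β + 1) (α + 1) (β + δ + 1) M hM h (by ring)
  have n1 : ∏ i ∈ Finset.range M, (((i : ℝ) + (α + 1)) * (i + (β + δ + 1)) * (i - M)) ≠ 0 := by
    rw [Finset.prod_ne_zero_iff]; intro i hi
    obtain ⟨a, b, c, _⟩ := nd_ne h (Finset.mem_range.1 hi)
    exact mul_ne_zero (mul_ne_zero a b) c
  apply mul_left_cancel₀ n1
  rw [mul_left_comm, ← key]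
  have X := poch_neg M (α - δ)
  have Y := poch_neg M β
  have P := poch_neg M 0
  have S := poch_neg M (-δ)
  have T := prod_tel M (fun j => 2 * (j : ℝ) + (δ - M))
  have Z := prod_tel M (fun j => (j : ℝ) + δ)
  have Q := prod_tel M (fun j => -δ + (j : ℝ))
  have hT0 : ∏ j ∈ Finset.range M, (2 * (j : ℝ) + (δ - M)) ≠ 0 := by
    rw [Finset.prod_ne_zero_iff]; intro i hi
    exact (nd_ne h (Finset.mem_range.1 hi)).2.2.2.2.1
  have hT1 : ∏ j ∈ Finset.range M, (2 * (j : ℝ) + (δ - M) + 1) ≠ 0 := by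
    rw [Finset.prod_ne_zero_iff]; intro i hi
    exact (nd_ne h (Finset.mem_range.1 hi)).2.2.2.2.2.1
  have hZ0 : ∏ j ∈ Finset.range M, (((j + 1 : ℕ) : ℝ) + δ) ≠ 0 := by
    rw [Finset.prod_ne_zero_iff]; intro i hi
    have := (nd_ne h (Finset.mem_range.1 hi)).2.2.2.2.2.2.2.2.1
    push_cast; intro hc; apply this; linarith
  have hT2 : ∏ j ∈ Finset.range M, (2 * ((j + 1 : ℕ) : ℝ) + (δ - M)) ≠ 0 := by
    rw [Finset.prod_ne_zero_iff]; intro i hi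
    have := (nd_ne h (Finset.mem_range.1 hi)).2.2.2.2.2.2.2.2.2
    push_cast; intro hc; apply this; linarith
  have hF : poch 1 M ≠ 0 := by
    unfold poch; rw [Finset.prod_ne_zero_iff]; intro i hi; positivity
  have hkn := hk.ne'
  unfold kappa at hkn
  simp only [ne_eq, div_eq_zero_iff, mul_eq_zero, not_or] at hkn
  obtain ⟨⟨k1, k2⟩, k3, k4⟩ := hkn
  have hδ : δ ≠ 0 := by
    intro hc; apply k4; unfold poch
    exact Finset.prod_eq_zero (Finset.mem_range.2 hM) (by simp [hc])
  have hδM : δ - M ≠ 0 := by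
    have := (nd_ne h hM).2.2.2.1
    simpa using this
  have hδP : (M : ℝ) + δ ≠ 0 := by
    obtain ⟨l, rfl⟩ : ∃ l, M = l + 1 := ⟨M - 1, by omega⟩
    have := (nd_ne h (show l < l + 1 by omega)).2.2.2.2.2.2.2.2.2
    push_cast at this ⊢; intro hc; apply this; linarith
  have ew : wt (δ - M) (α + 1) (β + δ + 1) M M =
      (∏ j ∈ Finset.range M, ((j : ℝ) + (α + 1)) * (j + (β + δ + 1)) * (j - M)) *
      (∏ j ∈ Finset.range M, ((j : ℝ) - M - (-δ))) *
      (∏ j ∈ Finset.range M, (2 * ((j + 1 : ℕ) : ℝ) + (δ - M))) /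
      ((∏ j ∈ Finset.range M, (2 * (j : ℝ) + (δ - M))) * poch 1 M *
       (∏ j ∈ Finset.range M, ((j : ℝ) - M - (α - δ))) *
       (∏ j ∈ Finset.range M, ((j : ℝ) - M - β)) *
       ∏ j ∈ Finset.range M, (((j + 1 : ℕ) : ℝ) + δ)) := by
    unfold wt poch
    simp only [← Finset.prod_mul_distrib, ← Finset.prod_div_distrib]
    refine Finset.prod_congr rfl fun j hj => ?_
    obtain ⟨a1, a2, a3, a4, a5, a6, a7, a8, a9, a10⟩ := nd_ne h (Finset.mem_range.1 hj)
    unfold cB cD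
    push_cast
    have r1 : 2 * ((j : ℝ) + 1) - 1 + (δ - M) = 2 * (j : ℝ) + (δ - M) + 1 := by ring
    have r2 : (j : ℝ) + 1 + (δ - M) - (α + 1) = j - M - (α - δ) := by ring
    have r3 : (j : ℝ) + 1 + (δ - M) - (β + δ + 1) = j - M - β := by ring
    have r4 : (j : ℝ) + 1 + (δ - M) + M = j + 1 + δ := by ring
    have r5 : (j : ℝ) + (δ - M) = j - M - (-δ) := by ring
    have r6 : 2 * ((j : ℝ) + 1) + (δ - M) = 2 * (j : ℝ) + 2 + (δ - M) := by ring
    have r7 : (1 : ℝ) + j = j + 1 := by ring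
    have a11 : (j : ℝ) + 1 ≠ 0 := by positivity
    rw [r1, r2, r3, r4, r5, r6, r7]
    rw [r2] at a7
    rw [r3] at a8
    rw [r4] at a9
    generalize (2 * (j : ℝ) + (δ - M) + 1) = u1 at *
    generalize (2 * (j : ℝ) + (δ - M)) = u2 at *
    generalize (2 * (j : ℝ) + 2 + (δ - M)) = u3 at *
    generalize ((j : ℝ) - M - (α - δ)) = u4 at *
    generalize ((j : ℝ) - M - β) = u5 at *
    generalize ((j : ℝ) + 1 + δ) = u6 at *
    generalize ((j : ℝ) + 1) = u7 at *
    field_simp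
  have ep : psi (δ - M) M M = (∏ j ∈ Finset.range M, ((j : ℝ) - M - 0)) *
      ∏ j ∈ Finset.range M, ((j : ℝ) + δ) := by
    unfold psi
    rw [← Finset.prod_mul_distrib]
    exact Finset.prod_congr rfl fun j _ => by ring
  have eE : ∏ i ∈ Finset.range M, ((i : ℝ) + 1 + (α + β + 1)) = poch (α + β + 2) M := by
    unfold poch; exact Finset.prod_congr rfl fun j _ => by ring
  have eS : ∏ j ∈ Finset.range M, (-δ + ((j + 1 : ℕ) : ℝ)) = poch (-δ + 1) M := by
    unfold poch; exact Finset.prod_congr rfl fun j _ => by push_cast; ring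
  have eQ : ∏ j ∈ Finset.range M, (-δ + (j : ℝ)) = poch (-δ) M := rfl
  rw [ew, ep, eE, X, Y, P, S]
  simp only [eS, eQ, Nat.cast_zero] at T Z Q
  rw [zero_add]
  unfold kappa
  generalize poch (α + β + 2) M = E at *
  generalize poch (α - δ + 1) M = x at *
  generalize poch (β + 1) M = y at *
  generalize poch (-δ + 1) M = s1 at *
  generalize poch (-δ) M = s0 at *
  generalize poch 1 M = F at *
  generalize (∏ j ∈ Finset.range M, (((j : ℝ) + (α + 1)) * (j + (β + δ + 1)) * (j - M))) = R at *
  generalize (∏ j ∈ Finset.range M, (2 * ((j + 1 : ℕ) : ℝ) + (δ - M))) = t2 at *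
  generalize (∏ j ∈ Finset.range M, (2 * (j : ℝ) + (δ - M))) = t0 at *
  generalize (∏ j ∈ Finset.range M, (((j + 1 : ℕ) : ℝ) + δ)) = z1 at *
  generalize (∏ j ∈ Finset.range M, ((j : ℝ) + δ)) = z0 at *
  have hsg : ((-1 : ℝ) ^ M) * ((-1 : ℝ) ^ M) = 1 := by rw [← mul_pow]; simp
  have hsg0 : ((-1 : ℝ) ^ M) ≠ 0 := by positivity
  generalize ((-1 : ℝ) ^ M) = g at *
  have main : s1 * t2 * z0 = t0 * z1 * s0 := by
    have : δ * (δ - M) * (M + δ) * (s1 * t2 * z0) = δ * (δ - M) * (M + δ) * (t0 * z1 * s0) := by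
      have T' : t2 * (δ - M) = t0 * (M + δ) := by linear_combination T
      have Z' : z1 * δ = z0 * (M + δ) := by linear_combination Z
      have Q' : s1 * δ = s0 * (δ - M) := by linear_combination -Q
      linear_combination (s1 * z0 * δ * (M + δ)) * T' + (-(s1 * δ * t0 * (M + δ))) * Z' + (z1 * δ * t0 * (M + δ)) * Q'
    exact mul_left_cancel₀ (mul_ne_zero (mul_ne_zero hδ hδM) hδP) this
  rw [div_mul_eq_mul_div, div_eq_iff (mul_ne_zero k3 k4)]
  have : E * (R * (g * s1) * t2 / (t0 * F * (g * x) * (g * y) * z1) * (g * F * z0)) =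
      E * R * (s1 * t2 * z0) / (t0 * z1 * x * y) := by
    field_simp
  rw [this, main]
  field_simp

lemma nd_of_pos {M : ℕ} {α β δ : ℝ} (h : PosCond M α β δ) :
    Nd (δ - M) (α + 1) (β + δ + 1) M ∧ Nd (α + β + 1) (α + 1) (β + δ + 1) M := by
  constructor
  · intro m hm
    have := (h.2.1 m hm).ne'
    rw [coeffB_eq, coeffD_eq] at this
    exact mul_ne_zero_iff.1 this
  · intro m hm
    have := (h.1 m hm).ne'
    rw [coeffA_eq, coeffC_eq] at this
    exact mul_ne_zero_iff.1 this

lemma prod_sqrt_sq (f g : ℕ → ℝ) (n : ℕ) (h : ∀ i < n, 0 < f i * g (i + 1)) :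
    (∏ i ∈ Finset.range n, f i / Real.sqrt (f i * g (i + 1))) *
    (∏ i ∈ Finset.range n, f i / Real.sqrt (f i * g (i + 1))) =
      ∏ i ∈ Finset.range n, f i / g (i + 1) := by
  rw [← Finset.prod_mul_distrib]
  refine Finset.prod_congr rfl fun i hi => ?_
  have hp := h i (Finset.mem_range.1 hi)
  rw [div_mul_div_comm, Real.mul_self_sqrt hp.le]
  have h0 : f i ≠ 0 := fun hc => by simp [hc] at hp
  have h1 : g (i + 1) ≠ 0 := fun hc => by simp [hc] at hp
  field_simp

theorem Pfun_orth (M : ℕ) (α β δ : ℝ) (h : PosCond M α β δ) (n n' : ℕ) (hn : n ≤ M) (hn' : n' ≤ M) :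
    ∑ m ∈ Finset.range (M + 1), Pfun M α β δ n m * Pfun M α β δ n' m = if n = n' then 1 else 0 := by
  rcases Nat.eq_zero_or_pos M with h0 | hM
  · subst h0
    have e1 : n = 0 := by omega
    have e2 : n' = 0 := by omega
    subst e1; subst e2
    simp [Pfun, racah, kappa, poch]
  obtain ⟨nd1, nd2⟩ := nd_of_pos h
  have hk := kappa_mul M hM α β δ nd1 nd2 h.2.2
  have hst : (δ - M) + (α + β + 1) + M + 1 = (α + 1) + (β + δ + 1) := by ring
  set a : ℕ → ℝ := fun n => ∏ i ∈ Finset.range n,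
      coeffA M α β δ i / Real.sqrt (coeffA M α β δ i * coeffC M α β δ (i + 1)) with ha
  have e : ∑ m ∈ Finset.range (M + 1), Pfun M α β δ n m * Pfun M α β δ n' m =
      kappa M α β δ * (a n * a n') * ip (δ - M) (α + β + 1) (α + 1) (β + δ + 1) M n n' := by
    unfold ip
    rw [Finset.mul_sum]
    refine Finset.sum_congr rfl fun m hm => ?_
    have hm : m ≤ M := by have := Finset.mem_range.1 hm; omega
    have hw : wt (δ - M) (α + 1) (β + δ + 1) M m =
      (∏ j ∈ Finset.range m, coeffB M α β δ j / Real.sqrt (coeffB M α β δ j * coeffD M α β δ (j + 1))) *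
      (∏ j ∈ Finset.range m, coeffB M α β δ j / Real.sqrt (coeffB M α β δ j * coeffD M α β δ (j + 1))) := by
      rw [prod_sqrt_sq _ _ _ (fun i hi => h.2.1 i (by omega))]
      unfold wt; simp only [coeffB_eq, coeffD_eq]
    have hs := Real.mul_self_sqrt h.2.2.le
    unfold Pfun
    rw [hw, racah_eq _ _ _ _ _ _ hn, racah_eq _ _ _ _ _ _ hn']
    simp only [ha]
    generalize √(kappa M α β δ) = S at hs ⊢
    rw [← hs]
    ring
  rw [e]
  split_ifs with hnn
  · subst hnn
    have hw : a n * a n = wt (α + β + 1) (α + 1) (β + δ + 1) M n := by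
      simp only [ha]
      rw [prod_sqrt_sq _ _ _ (fun i hi => h.1 i (by omega))]
      unfold wt; simp only [coeffA_eq, coeffC_eq]
    rw [hw, mul_assoc, norm_n _ _ _ _ _ hM nd1 nd2 hst n hn, hk]
  · rw [orth _ _ _ _ _ hM nd1 nd2 hst n n' hn hn' hnn, mul_zero]

theorem Pfun_orth_dual (M : ℕ) (α β δ : ℝ) (h : PosCond M α β δ) (m m' : ℕ) (hm : m ≤ M)
    (hm' : m' ≤ M) :
    ∑ n ∈ Finset.range (M + 1), Pfun M α β δ n m * Pfun M α β δ n m' = if m = m' then 1 else 0 := by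
  let P : Matrix (Fin (M + 1)) (Fin (M + 1)) ℝ := Matrix.of fun n m => Pfun M α β δ n m
  have h1 : P * P.transpose = 1 := by
    ext i j
    rw [Matrix.mul_apply, Matrix.one_apply]
    have := Pfun_orth M α β δ h i j (by omega) (by omega)
    rw [Finset.sum_range] at this
    simp only [P, Matrix.transpose_apply, Matrix.of_apply, Fin.ext_iff]
    exact this
  have h2 := mul_eq_one_comm.1 h1
  have := congrFun (congrFun h2 ⟨m, by omega⟩) ⟨m', by omega⟩
  rw [Matrix.mul_apply, Matrix.one_apply] at this
  simp only [P, Matrix.transpose_apply, Matrix.of_apply, Fin.ext_iff] at this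
  rw [Finset.sum_range]
  exact this

/-- Abstract gluing of two families of orthogonal matrices. -/
theorem glue (N : ℕ) (P Q : ℕ → ℕ → ℕ → ℝ)
    (hP : ∀ b ≤ N, ∀ n n', n ≤ N - b → n' ≤ N - b →
      ∑ m ∈ Finset.range (N - b + 1), P b n m * P b n' m = if n = n' then 1 else 0)
    (hQ : ∀ a ≤ N, ∀ n n', n ≤ N - a → n' ≤ N - a →
      ∑ m ∈ Finset.range (N - a + 1), Q a n m * Q a n' m = if n = n' then 1 else 0)
    (n1 n2 n1' n2' : ℕ) (h : n1 + n2 ≤ N) (h' : n1' + n2' ≤ N) :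
    (∑ m1 ∈ Finset.range (N + 1), ∑ m2 ∈ Finset.range (N + 1 - m1),
      (if n1 + n2 ≤ N ∧ m1 + m2 ≤ N ∧ n2 + m1 ≤ N then P n2 n1 m1 * Q m1 n2 m2 else 0) *
      (if n1' + n2' ≤ N ∧ m1 + m2 ≤ N ∧ n2' + m1 ≤ N then P n2' n1' m1 * Q m1 n2' m2 else 0))
    = if n1 = n1' ∧ n2 = n2' then 1 else 0 := by
  have e : ∀ m1 ∈ Finset.range (N + 1), (∑ m2 ∈ Finset.range (N + 1 - m1),
      (if n1 + n2 ≤ N ∧ m1 + m2 ≤ N ∧ n2 + m1 ≤ N then P n2 n1 m1 * Q m1 n2 m2 else 0) *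
      (if n1' + n2' ≤ N ∧ m1 + m2 ≤ N ∧ n2' + m1 ≤ N then P n2' n1' m1 * Q m1 n2' m2 else 0))
      = if m1 ≤ N - n2 then (if n2 = n2' then P n2 n1 m1 * P n2 n1' m1 else 0) else 0 := by
    intro m1 hm1
    have hm1 := Finset.mem_range.1 hm1
    by_cases c : n2 + m1 ≤ N ∧ n2' + m1 ≤ N
    · rw [if_pos (show m1 ≤ N - n2 by omega)]
      have := hQ m1 (by omega) n2 n2' (by omega) (by omega)
      have e2 : N + 1 - m1 = N - m1 + 1 := by omega
      rw [e2]
      have e3 : ∀ m2 ∈ Finset.range (N - m1 + 1),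
        (if n1 + n2 ≤ N ∧ m1 + m2 ≤ N ∧ n2 + m1 ≤ N then P n2 n1 m1 * Q m1 n2 m2 else 0) *
        (if n1' + n2' ≤ N ∧ m1 + m2 ≤ N ∧ n2' + m1 ≤ N then P n2' n1' m1 * Q m1 n2' m2 else 0)
        = (P n2 n1 m1 * P n2' n1' m1) * (Q m1 n2 m2 * Q m1 n2' m2) := by
        intro m2 hm2
        have hm2 := Finset.mem_range.1 hm2
        rw [if_pos ⟨h, by omega, c.1⟩, if_pos ⟨h', by omega, c.2⟩]; ring
      rw [Finset.sum_congr rfl e3, ← Finset.mul_sum, this]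
      split_ifs with hh
      · subst hh; ring
      · ring
    · rw [Finset.sum_eq_zero]
      · split_ifs with h1 h2
        · exfalso; apply c; constructor <;> omega
        · rfl
        · rfl
      · intro m2 _
        by_cases c1 : n2 + m1 ≤ N
        · have c2 : ¬ (n2' + m1 ≤ N) := fun hc => c ⟨c1, hc⟩
          simp [c2]
        · simp [c1]
  rw [Finset.sum_congr rfl e, ← Finset.sum_filter]
  have ef : (Finset.range (N + 1)).filter (fun m1 => m1 ≤ N - n2) = Finset.range (N - n2 + 1) := by
    ext x; simp only [Finset.mem_filter, Finset.mem_range]; omega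
  rw [ef]
  by_cases c : n2 = n2'
  · subst c
    simp only [if_true, and_true]
    exact hP n2 (by omega) n1 n1' (by omega) (by omega)
  · simp [c]

end RacahAux

/-- Unitarity of the Tratnik functions. -/
theorem stmt16 (j0 j1 j2 j3 j4 : ℝ) (N : ℕ)
    (h12 : j1 ≥ j2) (h24 : j2 ≥ j4) (h04 : j0 ≥ j4)
    (h0 : j0 ≥ 0) (h1 : j1 ≥ 0) (h2 : j2 ≥ 0) (h3 : j3 ≥ 0) (h4 : j4 ≥ 0)
    (hup : j1 + j2 + j0 + j4 ≥ j3) (hlow : j3 ≥ j1 + j2 + j0 - j4)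
    (hN : 0 < N) (hNdef : (N : ℝ) = j1 + j2 - j3 + j4 + j0)
    (hpos1 : ∀ n2 : ℕ, n2 ≤ N →
      PosCond (N - n2) (-2*j2 - 1) (-2*j1 - 1) ((N : ℝ) - n2 - 2*j2 + 2*j3 + 1))
    (hpos2 : ∀ m1 : ℕ, m1 ≤ N →
      PosCond (N - m1) (-2*j0 - 1) (-2*j4 - 1) ((N : ℝ) - m1 - 2*j0 - 2*j1 - 1)) :
    (∀ n1 n2 n1' n2' : ℕ, n1 + n2 ≤ N → n1' + n2' ≤ N →
      (∑ m1 ∈ Finset.range (N + 1), ∑ m2 ∈ Finset.range (N + 1 - m1),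
        Tratnik j0 j1 j2 j3 j4 N n1 n2 m1 m2 * Tratnik j0 j1 j2 j3 j4 N n1' n2' m1 m2)
        = if n1 = n1' ∧ n2 = n2' then 1 else 0) ∧
    (∀ m1 m2 m1' m2' : ℕ, m1 + m2 ≤ N → m1' + m2' ≤ N →
      (∑ n1 ∈ Finset.range (N + 1), ∑ n2 ∈ Finset.range (N + 1 - n1),
        Tratnik j0 j1 j2 j3 j4 N n1 n2 m1 m2 * Tratnik j0 j1 j2 j3 j4 N n1 n2 m1' m2')
        = if m1 = m1' ∧ m2 = m2' then 1 else 0) := by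
  refine ⟨?_, ?_⟩
  · intro n1 n2 n1' n2' h h'
    exact RacahAux.glue N
      (fun b n m => Pfun (N - b) (-2*j2 - 1) (-2*j1 - 1) ((N : ℝ) - b - 2*j2 + 2*j3 + 1) n m)
      (fun a n m => Pfun (N - a) (-2*j0 - 1) (-2*j4 - 1) ((N : ℝ) - a - 2*j0 - 2*j1 - 1) n m)
      (fun b hb n n' hn hn' => RacahAux.Pfun_orth _ _ _ _ (hpos1 b hb) n n' hn hn')
      (fun a ha n n' hn hn' => RacahAux.Pfun_orth _ _ _ _ (hpos2 a ha) n n' hn hn')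
      n1 n2 n1' n2' h h'
  · intro m1 m2 m1' m2' h h'
    have key := RacahAux.glue N
      (fun a m n => Pfun (N - a) (-2*j0 - 1) (-2*j4 - 1) ((N : ℝ) - a - 2*j0 - 2*j1 - 1) n m)
      (fun b m n => Pfun (N - b) (-2*j2 - 1) (-2*j1 - 1) ((N : ℝ) - b - 2*j2 + 2*j3 + 1) n m)
      (fun a ha n n' hn hn' => RacahAux.Pfun_orth_dual _ _ _ _ (hpos2 a ha) n n' hn hn')
      (fun b hb n n' hn hn' => RacahAux.Pfun_orth_dual _ _ _ _ (hpos1 b hb) n n' hn hn')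
      m2 m1 m2' m1' (by omega) (by omega)
    refine Eq.trans ?_ (key.trans (if_congr and_comm rfl rfl))
    rw [Finset.sum_comm' (t' := Finset.range (N + 1)) (s' := fun n2 => Finset.range (N + 1 - n2))
      (by intro x y; simp only [Finset.mem_range]; omega)]
    refine Finset.sum_congr rfl fun n2 _ => Finset.sum_congr rfl fun n1 _ => ?_
    unfold Tratnik
    congr 1
    · refine if_congr (by omega) (mul_comm _ _) rfl
    · refine if_congr (by omega) (mul_comm _ _) rfl
end
end
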